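/- Let n ≥ 1 and let Ω ⊊ ℝⁿ be a nonempty open set with d(x) := dist(x, ℝⁿ∖Ω), satisfying −Δd ≥ 0 in the sense of distributions on Ω (i.e. ∫_Ω d Δφ dx ≤ 0 for every nonnegative φ ∈ C_c^∞(Ω)) and having finite inner radius R := sup_{x ∈ Ω} d(x) < ∞. Then for every s ≥ 1, every γ > 1, and every u ∈ C_c^∞(Ω), one has ∫_Ω |∇u| / d^{s−1} dx ≥ (s−1) · ∫_Ω |u| / d^s dx + ((γ−1)/R^{s−1}) · ∫_Ω (|u| / d) · X^γ(d/R) dx. -/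

import Mathlib

open MeasureTheory Metric Set

/-- The (pointwise) Laplacian of a function on Euclidean space,
as the sum of its repeated directional derivatives along the coordinate directions. -/
noncomputable def lapl {n : ℕ} (φ : EuclideanSpace ℝ (Fin n) → ℝ)
    (x : EuclideanSpace ℝ (Fin n)) : ℝ :=
  ∑ i : Fin n,
    fderiv ℝ (fun y => fderiv ℝ φ y (EuclideanSpace.single i (1 : ℝ))) x
      (EuclideanSpace.single i (1 : ℝ))

/-
Write `d = infDist · Ωᶜ`. Mollification extends `-Δd ≥ 0` from smooth test functions to nonnegative
compactly supported Lipschitz ones `ψ`, in the form `∫ ⟪∇d, ∇ψ⟫ ≥ 0`. For `ψ = g(d) |u|` with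
`g ≥ 0`, the product rule and `|∇d| = 1` almost everywhere turn this into
`∫ -g'(d) |u| ≤ ∫ g(d) |∇u|`. With `X(t) = (1 - log t)⁻¹`, the choice
`g(t) = t^(1-s) - R^(1-s) X(t/R)^(γ-1)` has `-g'(t) = (s-1) t^(-s) + (γ-1) R^(1-s) X(t/R)^γ / t`,
and `0 ≤ g(t) ≤ t^(1-s)` for `0 < t ≤ R`.
-/

open Filter Topology InnerProductSpace Laplacian
open scoped NNReal ContDiff Gradient Convolution

section Lipschitz

lemma norm_fderiv_abs_le {E : Type*} [NormedAddCommGroup E] [NormedSpace ℝ E] {u : E → ℝ} {x : E}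
    (hu : ContinuousAt u x) : ‖fderiv ℝ (fun y => |u y|) x‖ ≤ ‖fderiv ℝ u x‖ := by
  rcases lt_trichotomy (u x) 0 with hneg | hzero | hpos
  · have habs : (fun y => |u y|) =ᶠ[𝓝 x] fun y => -u y :=
      (hu.eventually_lt_const hneg).mono fun y hy => abs_of_neg hy
    rw [habs.fderiv_eq, fderiv_fun_neg, norm_neg]
  · have hmin : IsLocalMin (fun y => |u y|) x := .of_forall fun y => by simp [hzero]
    simp [hmin.fderiv_eq_zero]
  · have habs : (fun y => |u y|) =ᶠ[𝓝 x] u :=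
      (hu.eventually_const_lt hpos).mono fun y hy => abs_of_pos hy
    rw [habs.fderiv_eq]

lemma exists_lipschitzWith_mul_of_support_subset {X : Type*} [PseudoMetricSpace X] {K : Set X}
    (hK : IsCompact K) {f v : X → ℝ} {Cf Cv : ℝ≥0} (hf : LipschitzOnWith Cf f K)
    (hv : LipschitzWith Cv v) (hvK : Function.support v ⊆ K) :
    ∃ C, LipschitzWith C fun x => f x * v x := by
  obtain ⟨Mf, hMf⟩ := hK.exists_bound_of_continuousOn hf.continuousOn
  obtain ⟨Mv, hMv⟩ := hK.exists_bound_of_continuousOn hv.continuous.continuousOn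
  have hv_zero : ∀ x ∉ K, v x = 0 := fun x hx => Function.notMem_support.1 fun h => hx (hvK h)
  have key : ∀ x ∈ K, ∀ y, |f x * v x - f y * v y| ≤ (Cf * |Mv| + |Mf| * Cv) * dist x y := by
    intro x hx y
    have hfx : |f x| ≤ |Mf| := (hMf x hx).trans (le_abs_self _)
    have hvxy : |v x - v y| ≤ Cv * dist x y := hv.dist_le_mul x y
    have hfirst : |f x * (v x - v y)| ≤ |Mf| * (Cv * dist x y) := by
      rw [abs_mul]; gcongr
    have hsecond : |(f x - f y) * v y| ≤ Cf * dist x y * |Mv| := by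
      by_cases hy : y ∈ K
      · rw [abs_mul]
        exact mul_le_mul (hf.dist_le_mul x hx y hy) ((hMv y hy).trans (le_abs_self _))
          (abs_nonneg _) (by positivity)
      · rw [hv_zero y hy, mul_zero, abs_zero]; positivity
    calc |f x * v x - f y * v y| = |f x * (v x - v y) + (f x - f y) * v y| := by ring_nf
      _ ≤ |Mf| * (Cv * dist x y) + Cf * dist x y * |Mv| :=
        (abs_add_le _ _).trans (add_le_add hfirst hsecond)
      _ = (Cf * |Mv| + |Mf| * Cv) * dist x y := by ring
  refine ⟨_, LipschitzWith.of_dist_le' (K := Cf * |Mv| + |Mf| * Cv) fun x y => ?_⟩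
  rw [Real.dist_eq]
  by_cases hx : x ∈ K
  · exact key x hx y
  by_cases hy : y ∈ K
  · rw [abs_sub_comm, dist_comm]; exact key y hy x
  · rw [hv_zero x hx, hv_zero y hy]; simp only [mul_zero, sub_zero, abs_zero]; positivity

lemma exists_lipschitzOnWith_comp_of_contDiffAt {X : Type*} [PseudoMetricSpace X] {K : Set X}
    (hK : IsCompact K) {d : X → ℝ} {C : ℝ≥0} (hd : LipschitzOnWith C d K) {g : ℝ → ℝ}
    (hg : ∀ x ∈ K, ContDiffAt ℝ 1 g (d x)) : ∃ D, LipschitzOnWith D (fun x => g (d x)) K := by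
  have hlocal : LocallyLipschitzOn (d '' K) g := by
    rintro _ ⟨x, hx, rfl⟩
    obtain ⟨D, t, ht, hgt⟩ := (hg x hx).exists_lipschitzOnWith
    exact ⟨D, t, mem_nhdsWithin_of_mem_nhds ht, hgt⟩
  obtain ⟨D, hD⟩ :=
    hlocal.exists_lipschitzOnWith_of_compact (hK.image_of_continuousOn hd.continuousOn)
  exact ⟨D * C, hD.comp hd (mapsTo_image d K)⟩

end Lipschitz

section Integrability

lemma integrable_mul_of_continuousOn_of_support_subset {X : Type*} [TopologicalSpace X] [T2Space X]
    [MeasurableSpace X] [OpensMeasurableSpace X] {μ : Measure X} {h F : X → ℝ} {K : Set X}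
    (hK : IsCompact K) (hh : ContinuousOn h K) (hF : Integrable F μ)
    (hFK : Function.support F ⊆ K) : Integrable (fun x => h x * F x) μ :=
  have hsupp : Function.support (fun x => h x * F x) ⊆ K :=
    (Function.support_mul_subset_right h F).trans hFK
  (integrableOn_iff_integrable_of_support_subset hsupp).1 (hF.integrableOn.continuousOn_mul hh hK)

variable {E : Type*} [NormedAddCommGroup E] [NormedSpace ℝ E] [FiniteDimensional ℝ E]
  [MeasurableSpace E] [BorelSpace E] {μ : Measure E}

lemma integrable_fderiv_of_lipschitzWith [IsFiniteMeasureOnCompacts μ] {C : ℝ≥0} {ψ : E → ℝ}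
    (hψ : LipschitzWith C ψ) (hψc : HasCompactSupport ψ) : Integrable (fderiv ℝ ψ) μ :=
  have hsupp : Function.support (fderiv ℝ ψ) ⊆ tsupport ψ := support_fderiv_subset ℝ
  (integrableOn_iff_integrable_of_support_subset hsupp).1 <|
    Measure.integrableOn_of_bounded hψc.measure_lt_top.ne
      (measurable_fderiv ℝ ψ).aestronglyMeasurable
      (.of_forall fun _ => norm_fderiv_le_of_lipschitz ℝ hψ)

lemma integrable_mul_norm_fderiv_of_continuousOn [IsFiniteMeasureOnCompacts μ] {C : ℝ≥0}
    {h u : E → ℝ} (hu : LipschitzWith C u) (huc : HasCompactSupport u)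
    (hh : ContinuousOn h (tsupport u)) : Integrable (fun x => h x * ‖fderiv ℝ u x‖) μ :=
  integrable_mul_of_continuousOn_of_support_subset huc hh
    (integrable_fderiv_of_lipschitzWith hu huc).norm
    fun _ hx => support_fderiv_subset ℝ (norm_ne_zero_iff.1 hx)

variable [μ.IsAddHaarMeasure]

lemma hasFDerivAt_convolution_of_lipschitzWith {η ψ : E → ℝ} {C : ℝ≥0} (hη : Continuous η)
    (hηc : HasCompactSupport η) (hψ : LipschitzWith C ψ) (x : E) :
    HasFDerivAt (η ⋆[ContinuousLinearMap.lsmul ℝ ℝ, μ] ψ)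
      ((η ⋆[ContinuousLinearMap.lsmul ℝ ℝ, μ] fderiv ℝ ψ) x) x := by
  have hcont : ∀ z, Continuous fun t => η t • ψ (z - t) := fun z =>
    hη.smul (hψ.continuous.comp (by fun_prop))
  have hdiff : ∀ᵐ t ∂μ, DifferentiableAt ℝ ψ (x - t) :=
    (quasiMeasurePreserving_sub_left μ x).ae hψ.ae_differentiableAt
  refine (hasFDerivAt_integral_of_dominated_loc_of_lip (bound := fun t => |η t| * C)
    (F := fun z t => η t • ψ (z - t)) univ_mem
    (.of_forall fun z => (hcont z).aestronglyMeasurable)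
    ((hcont x).integrable_of_hasCompactSupport hηc.smul_right)
    (hη.aestronglyMeasurable.smul
      ((measurable_fderiv ℝ ψ).comp (measurable_const.sub measurable_id)).aestronglyMeasurable)
    (.of_forall fun t => ?_)
    ((hη.abs.integrable_of_hasCompactSupport hηc.norm).mul_const _) ?_).2
  · refine LipschitzOnWith.of_dist_le_mul fun y _ z _ => ?_
    have := hψ.dist_le_mul (y - t) (z - t)
    rw [dist_sub_right] at this
    rw [dist_smul₀, Real.coe_nnabs, abs_mul, abs_abs, NNReal.abs_eq, mul_assoc]
    exact mul_le_mul_of_nonneg_left this (norm_nonneg _)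
  · filter_upwards [hdiff] with t ht
    exact (ht.hasFDerivAt.comp x ((hasFDerivAt_id x).sub_const t)).const_smul (η t)

end Integrability

section Mollification

variable {E F : Type*} [NormedAddCommGroup E] [NormedSpace ℝ E] [FiniteDimensional ℝ E]
  [MeasurableSpace E] [BorelSpace E] {μ : Measure E} [μ.IsAddHaarMeasure]
  [NormedAddCommGroup F] [NormedSpace ℝ F]

lemma norm_normed_convolution_le (b : ContDiffBump (0 : E)) {g : E → F} {C : ℝ}
    (hg : ∀ x, ‖g x‖ ≤ C) (x : E) :
    ‖(b.normed μ ⋆[ContinuousLinearMap.lsmul ℝ ℝ, μ] g) x‖ ≤ C := by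
  calc ‖(b.normed μ ⋆[ContinuousLinearMap.lsmul ℝ ℝ, μ] g) x‖
      ≤ ∫ t, b.normed μ t * C ∂μ := by
        refine norm_integral_le_of_norm_le (b.integrable_normed.mul_const C)
          (.of_forall fun t => ?_)
        rw [ContinuousLinearMap.lsmul_apply, norm_smul, Real.norm_of_nonneg (b.nonneg_normed t)]
        exact mul_le_mul_of_nonneg_left (hg _) (b.nonneg_normed t)
    _ = C := by rw [integral_mul_const, b.integral_normed, one_mul]

lemma tsupport_normed_convolution_subset (b : ContDiffBump (0 : E)) (g : E → F) :
    tsupport (b.normed μ ⋆[ContinuousLinearMap.lsmul ℝ ℝ, μ] g) ⊆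
      cthickening b.rOut (tsupport g) := by
  refine closure_minimal ((support_convolution_subset _).trans ?_) isClosed_cthickening
  rintro _ ⟨p, hp, q, hq, rfl⟩
  rw [b.support_normed_eq, mem_ball_zero_iff] at hp
  refine mem_cthickening_of_dist_le _ q _ _ (subset_tsupport g hq) ?_
  simpa [dist_eq_norm] using hp.le

lemma exists_seq_contDiffBump_rOut_tendsto_zero (E : Type*) [NormedAddCommGroup E] {δ : ℝ}
    (hδ : 0 < δ) : ∃ b : ℕ → ContDiffBump (0 : E), Tendsto (fun k => (b k).rOut) atTop (𝓝 0) ∧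
      (∀ k, (b k).rOut ≤ δ) ∧ ∀ k, (b k).rOut ≤ 2 * (b k).rIn := by
  have hr : ∀ k : ℕ, 0 < δ / (k + 1) := fun k => by positivity
  refine ⟨fun k => ⟨δ / (k + 1) / 2, δ / (k + 1), half_pos (hr k), half_lt_self (hr k)⟩, ?_, ?_, ?_⟩
  · simpa [div_eq_mul_inv] using (tendsto_one_div_add_atTop_nhds_zero_nat (𝕜 := ℝ)).const_mul δ
  · exact fun k => div_le_self hδ.le (by simp)
  · exact fun k => (mul_div_cancel₀ _ two_ne_zero).ge

theorem exists_seq_contDiff_tendsto_fderiv {ψ : E → ℝ} {C : ℝ≥0} {Ω : Set E} (hΩ : IsOpen Ω)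
    (hψ : LipschitzWith C ψ) (hψc : HasCompactSupport ψ) (hψΩ : tsupport ψ ⊆ Ω)
    (hψ0 : ∀ x, 0 ≤ ψ x) :
    ∃ K ⊆ Ω, IsCompact K ∧ ∃ φ : ℕ → E → ℝ, (∀ k, ContDiff ℝ ∞ (φ k)) ∧
      (∀ k, tsupport (φ k) ⊆ K) ∧ (∀ k x, 0 ≤ φ k x) ∧ (∀ k x, ‖fderiv ℝ (φ k) x‖ ≤ C) ∧
      ∀ᵐ x ∂μ, Tendsto (fun k => fderiv ℝ (φ k) x) atTop (𝓝 (fderiv ℝ ψ x)) := by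
  obtain ⟨δ, hδ, hδΩ⟩ := hψc.isCompact.exists_cthickening_subset_open hΩ hψΩ
  obtain ⟨b, hb0, hbδ, hb2⟩ := exists_seq_contDiffBump_rOut_tendsto_zero E hδ
  let φ k := (b k).normed μ ⋆[ContinuousLinearMap.lsmul ℝ ℝ, μ] ψ
  have hφ' : ∀ k x, fderiv ℝ (φ k) x =
      ((b k).normed μ ⋆[ContinuousLinearMap.lsmul ℝ ℝ, μ] fderiv ℝ ψ) x := fun k x =>
    (hasFDerivAt_convolution_of_lipschitzWith (b k).continuous_normed
      (b k).hasCompactSupport_normed hψ x).fderiv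
  refine ⟨_, hδΩ, hψc.isCompact.cthickening, φ, fun k => ?_, fun k => ?_, fun k x => ?_,
    fun k x => ?_, ?_⟩
  · exact (b k).hasCompactSupport_normed.contDiff_convolution_left _ (b k).contDiff_normed
      hψ.continuous.locallyIntegrable
  · exact (tsupport_normed_convolution_subset _ _).trans (cthickening_mono (hbδ k) _)
  · exact integral_nonneg fun t => mul_nonneg ((b k).nonneg_normed t) (hψ0 _)
  · rw [hφ']
    exact norm_normed_convolution_le _ (fun _ => norm_fderiv_le_of_lipschitz ℝ hψ) x
  · simp only [hφ']
    exact ContDiffBump.ae_convolution_tendsto_right_of_locallyIntegrable hb0 (.of_forall hb2)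
      (integrable_fderiv_of_lipschitzWith hψ hψc).locallyIntegrable

end Mollification

section WeakSuperharmonicity

variable {E : Type*} [NormedAddCommGroup E] [InnerProductSpace ℝ E] [FiniteDimensional ℝ E]

lemma laplacian_eq_sum_fderiv_fderiv {ι : Type*} [Fintype ι] (b : OrthonormalBasis ι ℝ E)
    {φ : E → ℝ} (hφ : ContDiff ℝ 2 φ) (x : E) :
    Δ φ x = ∑ i, fderiv ℝ (fun y => fderiv ℝ φ y (b i)) x (b i) := by
  have hφ' : DifferentiableAt ℝ (fderiv ℝ φ) x :=
    (hφ.fderiv_right (m := 1) le_rfl).differentiable one_ne_zero x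
  rw [laplacian_eq_iteratedFDeriv_orthonormalBasis φ b]
  simp [iteratedFDeriv_two_apply, fderiv_clm_apply hφ' (differentiableAt_const _)]

lemma norm_gradient_eq_norm_fderiv (f : E → ℝ) (x : E) : ‖∇ f x‖ = ‖fderiv ℝ f x‖ := by
  rw [← toDual_gradient, LinearIsometryEquiv.norm_map]

lemma sum_fderiv_mul_fderiv_eq_inner_gradient {ι : Type*} [Fintype ι] (b : OrthonormalBasis ι ℝ E)
    (f g : E → ℝ) (x : E) :
    ∑ i, fderiv ℝ f x (b i) * fderiv ℝ g x (b i) = ⟪∇ f x, ∇ g x⟫_ℝ := by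
  rw [← b.sum_inner_mul_inner]
  simp only [inner_gradient_left, inner_gradient_right, conj_trivial]

lemma setIntegral_inner_gradient_eq_integral
    [MeasurableSpace E] {μ : Measure E} {f ψ : E → ℝ} {Ω : Set E} (hψΩ : tsupport ψ ⊆ Ω) :
    ∫ x in Ω, ⟪∇ f x, ∇ ψ x⟫_ℝ ∂μ = ∫ x, ⟪∇ f x, ∇ ψ x⟫_ℝ ∂μ :=
  setIntegral_eq_integral_of_forall_compl_eq_zero fun x hx => by
    rw [inner_gradient_right, fderiv_of_notMem_tsupport ℝ fun h => hx (hψΩ h), zero_apply, map_zero]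

variable [MeasurableSpace E] [BorelSpace E]

lemma measurable_gradient (f : E → ℝ) : Measurable (∇ f) :=
  (toDual ℝ E).symm.continuous.measurable.comp (measurable_fderiv ℝ f)

lemma integral_fderiv_mul_eq_neg {μ : Measure E} [μ.IsAddHaarMeasure] {f h : E → ℝ} {C : ℝ≥0}
    (hf : LipschitzWith C f) (hh : ContDiff ℝ 1 h) (hhc : HasCompactSupport h) (v : E) :
    ∫ x, fderiv ℝ f x v * h x ∂μ = -∫ x, f x * fderiv ℝ h x v ∂μ := by
  obtain ⟨D, hD⟩ := hh.lipschitzWith_of_hasCompactSupport hhc one_ne_zero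
  have hlineDeriv : ∀ᵐ x ∂μ, lineDeriv ℝ f x v = fderiv ℝ f x v :=
    hf.ae_differentiableAt.mono fun x hx => hx.lineDeriv_eq_fderiv
  calc ∫ x, fderiv ℝ f x v * h x ∂μ = ∫ x, lineDeriv ℝ f x v * h x ∂μ :=
        integral_congr_ae (hlineDeriv.mono fun x hx => by simp only [hx])
    _ = ∫ x, lineDeriv ℝ h x (-v) * f x ∂μ := hf.integral_lineDeriv_mul_eq hD hhc v
    _ = -∫ x, f x * fderiv ℝ h x v ∂μ := by
        rw [← integral_neg]
        refine integral_congr_ae (.of_forall fun x => ?_)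
        simp only [(hh.differentiable one_ne_zero x).lineDeriv_eq_fderiv, map_neg]
        ring

lemma integrable_inner_gradient {μ : Measure E} [IsFiniteMeasureOnCompacts μ] {f ψ : E → ℝ}
    {C D : ℝ≥0} (hf : LipschitzWith C f) (hψ : LipschitzWith D ψ) (hψc : HasCompactSupport ψ) :
    Integrable (fun x => ⟪∇ f x, ∇ ψ x⟫_ℝ) μ := by
  refine ((integrable_fderiv_of_lipschitzWith hψ hψc).norm.const_mul (C : ℝ)).mono'
    ((measurable_gradient f).inner (measurable_gradient ψ)).aestronglyMeasurable
    (.of_forall fun x => (norm_inner_le_norm _ _).trans ?_)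
  rw [norm_gradient_eq_norm_fderiv, norm_gradient_eq_norm_fderiv]
  exact mul_le_mul_of_nonneg_right (norm_fderiv_le_of_lipschitz ℝ hf) (norm_nonneg _)

theorem integral_inner_gradient_eq_neg_integral_mul_laplacian {μ : Measure E} [μ.IsAddHaarMeasure]
    {f φ : E → ℝ} {C : ℝ≥0} (hf : LipschitzWith C f) (hφ : ContDiff ℝ 2 φ)
    (hφc : HasCompactSupport φ) :
    ∫ x, ⟪∇ f x, ∇ φ x⟫_ℝ ∂μ = -∫ x, f x * Δ φ x ∂μ := by
  let b := stdOrthonormalBasis ℝ E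
  have hφ' : ∀ v, ContDiff ℝ 1 fun x => fderiv ℝ φ x v := fun v =>
    (hφ.fderiv_right le_rfl).clm_apply contDiff_const
  have hφ'c : ∀ v, HasCompactSupport fun x => fderiv ℝ φ x v := hφc.fderiv_apply ℝ
  have hint : ∀ v, Integrable (fun x => fderiv ℝ f x v * fderiv ℝ φ x v) μ := fun v =>
    ((hφ' v).continuous.integrable_of_hasCompactSupport (hφ'c v)).bdd_mul
      (measurable_fderiv_apply_const ℝ f v).aestronglyMeasurable (.of_forall fun x =>
        (fderiv ℝ f x).le_of_opNorm_le (norm_fderiv_le_of_lipschitz ℝ hf) v)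
  have hint' : ∀ v, Integrable (fun x => f x * fderiv ℝ (fun y => fderiv ℝ φ y v) x v) μ :=
    fun v => (hf.continuous.mul (((hφ' v).continuous_fderiv one_ne_zero).clm_apply
      continuous_const)).integrable_of_hasCompactSupport ((hφ'c v).fderiv_apply ℝ v).mul_left
  simp only [← sum_fderiv_mul_fderiv_eq_inner_gradient b, laplacian_eq_sum_fderiv_fderiv b hφ,
    Finset.mul_sum]
  rw [integral_finsetSum _ fun i _ => hint (b i), integral_finsetSum _ fun i _ => hint' (b i),
    ← Finset.sum_neg_distrib]
  exact Finset.sum_congr rfl fun i _ => integral_fderiv_mul_eq_neg hf (hφ' (b i)) (hφ'c (b i)) _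

/-- `f` is superharmonic on `Ω` in the sense of distributions: `-Δf` is nonnegative when tested
against nonnegative smooth functions with compact support in `Ω`. This is meaningful only for `f`
locally integrable on `Ω`: a divergent integral is `0` here. -/
def IsWeaklySuperharmonicOn (f : E → ℝ) (Ω : Set E) : Prop :=
  ∀ φ : E → ℝ, ContDiff ℝ ∞ φ → HasCompactSupport φ → tsupport φ ⊆ Ω → (∀ x, 0 ≤ φ x) →
    ∫ x in Ω, f x * Δ φ x ≤ 0

namespace IsWeaklySuperharmonicOn

variable {f : E → ℝ} {Ω : Set E} {C : ℝ≥0}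

lemma integral_inner_gradient_nonneg_of_contDiff (h : IsWeaklySuperharmonicOn f Ω)
    (hf : LipschitzWith C f) {φ : E → ℝ} (hφ : ContDiff ℝ ∞ φ) (hφc : HasCompactSupport φ)
    (hφΩ : tsupport φ ⊆ Ω) (hφ0 : ∀ x, 0 ≤ φ x) : 0 ≤ ∫ x, ⟪∇ f x, ∇ φ x⟫_ℝ := by
  have hφ2 : ContDiff ℝ 2 φ := hφ.of_le (by norm_cast)
  have hΔ : ∀ x ∉ Ω, f x * Δ φ x = 0 := fun x hx => by
    have hx' : φ =ᶠ[𝓝 x] fun _ => 0 :=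
      notMem_tsupport_iff_eventuallyEq.1 fun hmem => hx (hφΩ hmem)
    have : Δ φ x = 0 := by simpa using (laplacian_congr_nhds hx').eq_of_nhds
    rw [this, mul_zero]
  rw [integral_inner_gradient_eq_neg_integral_mul_laplacian hf hφ2 hφc, neg_nonneg,
    ← setIntegral_eq_integral_of_forall_compl_eq_zero hΔ]
  exact h φ hφ hφc hφΩ hφ0

theorem integral_inner_gradient_nonneg (h : IsWeaklySuperharmonicOn f Ω) (hΩ : IsOpen Ω)
    (hf : LipschitzWith C f) {ψ : E → ℝ} {D : ℝ≥0} (hψ : LipschitzWith D ψ)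
    (hψc : HasCompactSupport ψ) (hψΩ : tsupport ψ ⊆ Ω) (hψ0 : ∀ x, 0 ≤ ψ x) :
    0 ≤ ∫ x in Ω, ⟪∇ f x, ∇ ψ x⟫_ℝ := by
  rw [setIntegral_inner_gradient_eq_integral hψΩ]
  obtain ⟨K, hKΩ, hK, φ, hφ, hφK, hφ0, hφD, hφψ⟩ :=
    exists_seq_contDiff_tendsto_fderiv (μ := volume) hΩ hψ hψc hψΩ hψ0
  have hnonneg : ∀ k, 0 ≤ ∫ x, ⟪∇ f x, ∇ (φ k) x⟫_ℝ := fun k =>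
    h.integral_inner_gradient_nonneg_of_contDiff hf (hφ k)
      (hK.of_isClosed_subset (isClosed_tsupport _) (hφK k)) ((hφK k).trans hKΩ) (hφ0 k)
  refine ge_of_tendsto' (tendsto_integral_of_dominated_convergence
    (K.indicator fun _ => (C * D : ℝ)) (fun k => ?_) ?_ (fun k => .of_forall fun x => ?_) ?_)
    hnonneg
  · exact ((measurable_gradient f).inner (measurable_gradient (φ k))).aestronglyMeasurable
  · exact (integrable_indicator_iff hK.measurableSet).2 (integrableOn_const hK.measure_lt_top.ne)
  · by_cases hx : x ∈ K
    · rw [indicator_of_mem hx]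
      refine (norm_inner_le_norm _ _).trans ?_
      rw [norm_gradient_eq_norm_fderiv, norm_gradient_eq_norm_fderiv]
      exact mul_le_mul (norm_fderiv_le_of_lipschitz ℝ hf) (hφD k x) (norm_nonneg _) C.coe_nonneg
    · have : fderiv ℝ (φ k) x = 0 := fderiv_of_notMem_tsupport ℝ fun hmem => hx (hφK k hmem)
      rw [inner_gradient_right, this]
      simp [hx]
  · filter_upwards [hφψ] with x hx
    exact tendsto_const_nhds.inner (((toDual ℝ E).symm.continuous.tendsto _).comp hx)

end IsWeaklySuperharmonicOn

end WeakSuperharmonicity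

section DistanceFunction

lemma norm_fderiv_infDist_eq_one {E : Type*} [NormedAddCommGroup E] [InnerProductSpace ℝ E]
    [ProperSpace E] {S : Set E} (hS : IsClosed S) (hne : S.Nonempty) {x : E} (hx : x ∉ S)
    (hd : DifferentiableAt ℝ (infDist · S) x) : ‖fderiv ℝ (infDist · S) x‖ = 1 := by
  obtain ⟨y, hy, hxy⟩ := hS.exists_infDist_eq_dist hne x
  have hxy0 : x - y ≠ 0 := sub_ne_zero.2 fun h => hx (h ▸ hy)
  have : Nontrivial E := nontrivial_of_ne _ _ hxy0
  have hnorm : DifferentiableAt ℝ (‖·‖) (x - y) :=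
    (contDiffAt_norm ℝ hxy0).differentiableAt one_ne_zero
  have hnorm' : DifferentiableAt ℝ (fun z => ‖z - y‖) x :=
    hnorm.comp x (differentiableAt_id.sub_const y)
  have hmax : IsLocalMax (fun z => infDist z S - ‖z - y‖) x := .of_forall fun z => by
    have hzy : infDist z S ≤ dist z y := infDist_le_dist_of_mem hy
    simpa only [← dist_eq_norm, hxy, sub_self, sub_nonpos] using hzy
  have hfderiv : fderiv ℝ (infDist · S) x = fderiv ℝ (fun z => ‖z - y‖) x := by
    rw [← sub_eq_zero, ← fderiv_fun_sub hd hnorm']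
    exact hmax.fderiv_eq_zero
  rw [hfderiv, fderiv_comp_sub (f := (‖·‖)), norm_fderiv_norm hnorm]

lemma infDist_compl_pos {X : Type*} [PseudoMetricSpace X] {Ω : Set X} (hΩ : IsOpen Ω)
    (hne : Ωᶜ.Nonempty) {x : X} (hx : x ∈ Ω) : 0 < infDist x Ωᶜ :=
  (hΩ.isClosed_compl.notMem_iff_infDist_pos hne).1 (notMem_compl_iff.2 hx)

lemma continuousOn_comp_infDist {X : Type*} [PseudoMetricSpace X] {K S : Set X} {h : ℝ → ℝ}
    (hh : ∀ x ∈ K, ContinuousAt h (infDist x S)) : ContinuousOn (fun x => h (infDist x S)) K :=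
  fun x hx => ContinuousAt.comp_continuousWithinAt (f := (infDist · S)) (hh x hx)
    (continuous_infDist_pt S).continuousWithinAt

lemma integrableOn_comp_infDist_mul {X : Type*} [MetricSpace X] [MeasurableSpace X]
    [OpensMeasurableSpace X] {μ : Measure X} [IsFiniteMeasureOnCompacts μ] {Ω : Set X} {h : ℝ → ℝ}
    {v : X → ℝ} (hh : ∀ x ∈ Ω, ContinuousAt h (infDist x Ωᶜ)) (hv : Continuous v)
    (hvc : HasCompactSupport v) (hvΩ : tsupport v ⊆ Ω) :
    IntegrableOn (fun x => h (infDist x Ωᶜ) * v x) Ω μ :=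
  (integrable_mul_of_continuousOn_of_support_subset hvc
    (continuousOn_comp_infDist fun x hx => hh x (hvΩ hx))
    (hv.integrable_of_hasCompactSupport hvc) (subset_tsupport v)).integrableOn

variable {E : Type*} [NormedAddCommGroup E] [InnerProductSpace ℝ E] [FiniteDimensional ℝ E]
  {Ω : Set E}

lemma inner_gradient_infDist_le (hΩ : IsOpen Ω) (hne : Ωᶜ.Nonempty) {g : ℝ → ℝ} {v : E → ℝ} {x : E}
    (hx : x ∈ Ω) (hd : DifferentiableAt ℝ (infDist · Ωᶜ) x) (hv : DifferentiableAt ℝ v x)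
    (hg : DifferentiableAt ℝ g (infDist x Ωᶜ)) (hg0 : 0 ≤ g (infDist x Ωᶜ)) :
    ⟪∇ (infDist · Ωᶜ) x, ∇ (fun y => g (infDist y Ωᶜ) * v y) x⟫_ℝ ≤
      g (infDist x Ωᶜ) * ‖fderiv ℝ v x‖ + deriv g (infDist x Ωᶜ) * v x := by
  set p := ∇ (infDist · Ωᶜ) x with hp
  have hp1 : ‖p‖ = 1 := by
    rw [norm_gradient_eq_norm_fderiv]
    exact norm_fderiv_infDist_eq_one hΩ.isClosed_compl hne (by simpa using hx) hd
  have hdp : fderiv ℝ (infDist · Ωᶜ) x p = 1 := by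
    rw [← inner_gradient_left, ← hp, real_inner_self_eq_norm_sq, hp1, one_pow]
  have hvp : fderiv ℝ v x p ≤ ‖fderiv ℝ v x‖ := by
    simpa [hp1] using (le_abs_self _).trans ((fderiv ℝ v x).le_opNorm p)
  have hprod : HasFDerivAt (fun y => g (infDist y Ωᶜ) * v y) (g (infDist x Ωᶜ) • fderiv ℝ v x +
      v x • deriv g (infDist x Ωᶜ) • fderiv ℝ (infDist · Ωᶜ) x) x :=
    (hg.hasDerivAt.comp_hasFDerivAt x hd.hasFDerivAt).mul hv.hasFDerivAt
  calc ⟪p, ∇ (fun y => g (infDist y Ωᶜ) * v y) x⟫_ℝ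
      = g (infDist x Ωᶜ) * fderiv ℝ v x p + deriv g (infDist x Ωᶜ) * v x := by
        rw [inner_gradient_right, conj_trivial, hprod.fderiv]
        simp [hdp, mul_comm]
    _ ≤ _ := by gcongr

variable [MeasurableSpace E] [BorelSpace E] {μ : Measure E} [IsFiniteMeasureOnCompacts μ]

lemma integrableOn_comp_infDist_mul_norm_fderiv {h : ℝ → ℝ}
    (hh : ∀ x ∈ Ω, ContinuousAt h (infDist x Ωᶜ)) {v : E → ℝ} {C : ℝ≥0} (hv : LipschitzWith C v)
    (hvc : HasCompactSupport v) (hvΩ : tsupport v ⊆ Ω) :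
    IntegrableOn (fun x => h (infDist x Ωᶜ) * ‖fderiv ℝ v x‖) Ω μ :=
  (integrable_mul_norm_fderiv_of_continuousOn hv hvc
    (continuousOn_comp_infDist fun x hx => hh x (hvΩ hx))).integrableOn

theorem integral_neg_deriv_comp_infDist_mul_le (hΩ : IsOpen Ω) (hne : Ωᶜ.Nonempty)
    (hsuper : IsWeaklySuperharmonicOn (infDist · Ωᶜ) Ω) {g : ℝ → ℝ}
    (hg : ∀ x ∈ Ω, ContDiffAt ℝ 1 g (infDist x Ωᶜ)) (hg0 : ∀ x ∈ Ω, 0 ≤ g (infDist x Ωᶜ))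
    {v : E → ℝ} {C : ℝ≥0} (hv : LipschitzWith C v) (hvc : HasCompactSupport v)
    (hvΩ : tsupport v ⊆ Ω) (hv0 : ∀ x, 0 ≤ v x) :
    ∫ x in Ω, -deriv g (infDist x Ωᶜ) * v x ≤ ∫ x in Ω, g (infDist x Ωᶜ) * ‖fderiv ℝ v x‖ := by
  set d : E → ℝ := (infDist · Ωᶜ)
  have hd : LipschitzWith 1 d := lipschitz_infDist_pt _
  have hK : IsCompact (tsupport v) := hvc
  obtain ⟨Cg, hCg⟩ := exists_lipschitzOnWith_comp_of_contDiffAt hK hd.lipschitzOnWith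
    fun x hx => hg x (hvΩ hx)
  obtain ⟨D, hψ⟩ := exists_lipschitzWith_mul_of_support_subset hK hCg hv (subset_tsupport v)
  have hψc : HasCompactSupport fun x => g (d x) * v x := hvc.mul_left
  have hψΩ : tsupport (fun x => g (d x) * v x) ⊆ Ω := (tsupport_mul_subset_right ..).trans hvΩ
  have hψ0 : ∀ x, 0 ≤ g (d x) * v x := fun x => by
    by_cases hx : x ∈ tsupport v
    · exact mul_nonneg (hg0 x (hvΩ hx)) (hv0 x)
    · rw [image_eq_zero_of_notMem_tsupport hx, mul_zero]
  have hint : IntegrableOn (fun x => g (d x) * ‖fderiv ℝ v x‖) Ω :=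
    integrableOn_comp_infDist_mul_norm_fderiv (fun x hx => (hg x hx).continuousAt) hv hvc hvΩ
  have hint' : IntegrableOn (fun x => deriv g (d x) * v x) Ω :=
    integrableOn_comp_infDist_mul
      (fun x hx => ((hg x hx).derivWithin (m := 0) (zero_add 1).le).continuousAt)
      hv.continuous hvc hvΩ
  have hpointwise : ∀ᵐ x, x ∈ Ω → ⟪∇ d x, ∇ (fun y => g (d y) * v y) x⟫_ℝ ≤
      g (d x) * ‖fderiv ℝ v x‖ + deriv g (d x) * v x := by
    filter_upwards [hd.ae_differentiableAt, hv.ae_differentiableAt] with x hdx hvx hx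
    exact inner_gradient_infDist_le hΩ hne hx hdx hvx ((hg x hx).differentiableAt one_ne_zero)
      (hg0 x hx)
  have hkey : 0 ≤ ∫ x in Ω, (g (d x) * ‖fderiv ℝ v x‖ + deriv g (d x) * v x) :=
    (hsuper.integral_inner_gradient_nonneg hΩ hd hψ hψc hψΩ hψ0).trans <|
      setIntegral_mono_on_ae (integrable_inner_gradient hd hψ hψc).integrableOn
        (hint.add hint') hΩ.measurableSet hpointwise
  rw [integral_add hint hint'] at hkey
  simp only [neg_mul, integral_neg]
  linarith

theorem integral_neg_deriv_comp_infDist_mul_abs_le (hΩ : IsOpen Ω) (hne : Ωᶜ.Nonempty)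
    (hsuper : IsWeaklySuperharmonicOn (infDist · Ωᶜ) Ω) {g : ℝ → ℝ}
    (hg : ∀ x ∈ Ω, ContDiffAt ℝ 1 g (infDist x Ωᶜ)) (hg0 : ∀ x ∈ Ω, 0 ≤ g (infDist x Ωᶜ))
    {u : E → ℝ} {C : ℝ≥0} (hu : LipschitzWith C u) (huc : HasCompactSupport u)
    (huΩ : tsupport u ⊆ Ω) :
    ∫ x in Ω, -deriv g (infDist x Ωᶜ) * |u x| ≤ ∫ x in Ω, g (infDist x Ωᶜ) * ‖fderiv ℝ u x‖ := by
  have habs : LipschitzWith (1 * C) fun x => |u x| := lipschitzWith_one_norm.comp hu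
  have habsc : HasCompactSupport fun x => |u x| := huc.norm
  have habsΩ : tsupport (fun x => |u x|) ⊆ Ω := (tsupport_comp_subset abs_zero u).trans huΩ
  have hgd : ∀ x ∈ Ω, ContinuousAt g (infDist x Ωᶜ) := fun x hx => (hg x hx).continuousAt
  refine (integral_neg_deriv_comp_infDist_mul_le hΩ hne hsuper hg hg0 habs habsc habsΩ
    fun _ => abs_nonneg _).trans (setIntegral_mono_on
      (integrableOn_comp_infDist_mul_norm_fderiv hgd habs habsc habsΩ)
      (integrableOn_comp_infDist_mul_norm_fderiv hgd hu huc huΩ) hΩ.measurableSet fun x hx => ?_)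
  exact mul_le_mul_of_nonneg_left (norm_fderiv_abs_le hu.continuous.continuousAt) (hg0 x hx)

end DistanceFunction

section LogarithmicProfile

/-- The logarithmic weight `X(t) = (1 - log t)⁻¹` on `(0, 1]`. -/
noncomputable def logWeight (t : ℝ) : ℝ := (1 - Real.log t)⁻¹

lemma one_le_one_sub_log {t : ℝ} (ht : t ∈ Ioc 0 1) : 1 ≤ 1 - Real.log t := by
  linarith [Real.log_nonpos ht.1.le ht.2]

lemma logWeight_pos {t : ℝ} (ht : t ∈ Ioc 0 1) : 0 < logWeight t :=
  inv_pos.2 (one_pos.trans_le (one_le_one_sub_log ht))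

lemma logWeight_le_one {t : ℝ} (ht : t ∈ Ioc 0 1) : logWeight t ≤ 1 :=
  inv_le_one_of_one_le₀ (one_le_one_sub_log ht)

lemma contDiffAt_logWeight {n : WithTop ℕ∞} {t : ℝ} (ht : t ∈ Ioc 0 1) :
    ContDiffAt ℝ n logWeight t :=
  (contDiffAt_const.sub (Real.contDiffAt_log.2 ht.1.ne')).inv
    (one_pos.trans_le (one_le_one_sub_log ht)).ne'

lemma hasDerivAt_logWeight_rpow (p : ℝ) {t : ℝ} (ht : t ∈ Ioc 0 1) :
    HasDerivAt (fun τ => logWeight τ ^ p) (p * logWeight t ^ (p + 1) / t) t := by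
  have hX : 0 < logWeight t := logWeight_pos ht
  have hderiv : HasDerivAt logWeight (logWeight t ^ 2 / t) t := by
    refine (((Real.hasDerivAt_log ht.1.ne').const_sub 1).inv (inv_pos.1 hX).ne').congr_deriv ?_
    simp only [logWeight]
    field_simp
  refine (hderiv.rpow_const (Or.inl hX.ne')).congr_deriv ?_
  rw [Real.rpow_sub_one hX.ne', Real.rpow_add_one hX.ne']
  field_simp

/-- The profile `g` for which `-g'` is the sum of the two weights on the right-hand side of the
Hardy inequality with logarithmic remainder. -/
noncomputable def hardyProfile (R s γ t : ℝ) : ℝ :=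
  (t ^ (s - 1))⁻¹ - (R ^ (s - 1))⁻¹ * logWeight (t / R) ^ (γ - 1)

variable {R s γ t : ℝ}

lemma div_mem_Ioc_zero_one (ht : t ∈ Ioc 0 R) : t / R ∈ Ioc 0 1 :=
  have hR : 0 < R := ht.1.trans_le ht.2
  ⟨div_pos ht.1 hR, (div_le_one hR).2 ht.2⟩

lemma contDiffAt_logWeight_div {n : WithTop ℕ∞} (ht : t ∈ Ioc 0 R) :
    ContDiffAt ℝ n (fun τ => logWeight (τ / R)) t :=
  ContDiffAt.comp (f := (· / R)) t (contDiffAt_logWeight (div_mem_Ioc_zero_one ht))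
    (contDiffAt_id.div_const R)

lemma continuousAt_inv_rpow (p : ℝ) (ht : 0 < t) : ContinuousAt (fun τ : ℝ => (τ ^ p)⁻¹) t :=
  (Real.continuousAt_rpow_const t p (.inl ht.ne')).inv₀ (Real.rpow_pos_of_pos ht p).ne'

lemma continuousAt_logWeight_rpow_div (p : ℝ) (ht : t ∈ Ioc 0 R) :
    ContinuousAt (fun τ => logWeight (τ / R) ^ p / τ) t :=
  ((contDiffAt_logWeight_div (n := 0) ht).continuousAt.rpow_const
    (.inl (logWeight_pos (div_mem_Ioc_zero_one ht)).ne')).div continuousAt_id ht.1.ne'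

lemma contDiffAt_hardyProfile {n : WithTop ℕ∞} (ht : t ∈ Ioc 0 R) :
    ContDiffAt ℝ n (hardyProfile R s γ) t :=
  ((contDiffAt_id.rpow_const_of_ne ht.1.ne').inv (Real.rpow_pos_of_pos ht.1 _).ne').sub
    (contDiffAt_const.mul ((contDiffAt_logWeight_div ht).rpow_const_of_ne
      (logWeight_pos (div_mem_Ioc_zero_one ht)).ne'))

lemma neg_deriv_hardyProfile (ht : t ∈ Ioc 0 R) :
    -deriv (hardyProfile R s γ) t =
      (s - 1) / t ^ s + (γ - 1) / R ^ (s - 1) * (logWeight (t / R) ^ γ / t) := by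
  have hR : 0 < R := ht.1.trans_le ht.2
  have hpow : HasDerivAt (fun τ : ℝ => (τ ^ (s - 1))⁻¹) (-((s - 1) / t ^ s)) t := by
    have hts : 0 < t ^ s := Real.rpow_pos_of_pos ht.1 s
    refine ((Real.hasDerivAt_rpow_const (Or.inl ht.1.ne')).inv
      (Real.rpow_pos_of_pos ht.1 _).ne').congr_deriv ?_
    simp only [Real.rpow_sub_one ht.1.ne']
    field [ht.1.ne']
  have hlog : HasDerivAt (fun τ => logWeight (τ / R) ^ (γ - 1))
      ((γ - 1) * (logWeight (t / R) ^ γ / t)) t := by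
    refine ((hasDerivAt_logWeight_rpow (γ - 1) (div_mem_Ioc_zero_one ht)).comp t
      ((hasDerivAt_id t).div_const R)).congr_deriv ?_
    rw [sub_add_cancel]
    field [hR.ne']
  have hprofile : HasDerivAt (hardyProfile R s γ) _ t := hpow.sub (hlog.const_mul (R ^ (s - 1))⁻¹)
  rw [hprofile.deriv]
  ring

lemma hardyProfile_le_inv_rpow (ht : t ∈ Ioc 0 R) : hardyProfile R s γ t ≤ (t ^ (s - 1))⁻¹ := by
  have hR : 0 < R := ht.1.trans_le ht.2
  have hX : 0 < logWeight (t / R) := logWeight_pos (div_mem_Ioc_zero_one ht)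
  exact sub_le_self _ (by positivity)

lemma hardyProfile_nonneg (hs : 1 ≤ s) (hγ : 1 ≤ γ) (ht : t ∈ Ioc 0 R) :
    0 ≤ hardyProfile R s γ t := by
  obtain ⟨ht0, htR⟩ := ht
  have hR : 0 < R := ht0.trans_le htR
  have hX : t / R ∈ Ioc 0 1 := div_mem_Ioc_zero_one ⟨ht0, htR⟩
  refine sub_nonneg.2 ?_
  calc (R ^ (s - 1))⁻¹ * logWeight (t / R) ^ (γ - 1) ≤ (R ^ (s - 1))⁻¹ :=
        mul_le_of_le_one_right (by positivity)
          (Real.rpow_le_one (logWeight_pos hX).le (logWeight_le_one hX) (sub_nonneg.2 hγ))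
    _ ≤ (t ^ (s - 1))⁻¹ :=
        inv_anti₀ (by positivity) (Real.rpow_le_rpow ht0.le htR (sub_nonneg.2 hs))

end LogarithmicProfile

lemma lapl_eq_laplacian {n : ℕ} {φ : EuclideanSpace ℝ (Fin n) → ℝ} (hφ : ContDiff ℝ 2 φ) :
    lapl φ = Δ φ := by
  ext x
  simp only [lapl, laplacian_eq_sum_fderiv_fderiv (EuclideanSpace.basisFun (Fin n) ℝ) hφ,
    EuclideanSpace.basisFun_apply]

theorem l1_weighted_hardy_log_remainder_meanconvex_general {E : Type*} [NormedAddCommGroup E]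
    [InnerProductSpace ℝ E] [FiniteDimensional ℝ E] [MeasurableSpace E] [BorelSpace E] {Ω : Set E}
    (hΩ : IsOpen Ω) (hne : Ωᶜ.Nonempty) (hsuper : IsWeaklySuperharmonicOn (infDist · Ωᶜ) Ω)
    {R s γ : ℝ} (hR : ∀ x ∈ Ω, infDist x Ωᶜ ≤ R) (hs : 1 ≤ s) (hγ : 1 ≤ γ) {u : E → ℝ} {C : ℝ≥0}
    (hu : LipschitzWith C u) (huc : HasCompactSupport u) (huΩ : tsupport u ⊆ Ω) :
    (s - 1) * (∫ x in Ω, |u x| / infDist x Ωᶜ ^ s) + (γ - 1) / R ^ (s - 1) *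
        (∫ x in Ω, |u x| / infDist x Ωᶜ * logWeight (infDist x Ωᶜ / R) ^ γ) ≤
      ∫ x in Ω, ‖fderiv ℝ u x‖ / infDist x Ωᶜ ^ (s - 1) := by
  have hd : ∀ x ∈ Ω, infDist x Ωᶜ ∈ Ioc 0 R := fun x hx => ⟨infDist_compl_pos hΩ hne hx, hR x hx⟩
  have habsΩ : tsupport (fun x => |u x|) ⊆ Ω := (tsupport_comp_subset abs_zero u).trans huΩ
  have hint_pow : IntegrableOn (fun x => |u x| / infDist x Ωᶜ ^ s) Ω := by
    simpa only [div_eq_inv_mul] using integrableOn_comp_infDist_mul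
      (fun x hx => continuousAt_inv_rpow s (hd x hx).1) hu.continuous.abs huc.norm habsΩ
  have hint_log : IntegrableOn
      (fun x => |u x| / infDist x Ωᶜ * logWeight (infDist x Ωᶜ / R) ^ γ) Ω := by
    refine (integrableOn_comp_infDist_mul (fun x hx => continuousAt_logWeight_rpow_div γ (hd x hx))
      hu.continuous.abs huc.norm habsΩ).congr_fun (fun x _ => ?_) hΩ.measurableSet
    ring
  calc (s - 1) * (∫ x in Ω, |u x| / infDist x Ωᶜ ^ s) + (γ - 1) / R ^ (s - 1) *
        (∫ x in Ω, |u x| / infDist x Ωᶜ * logWeight (infDist x Ωᶜ / R) ^ γ)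
      = ∫ x in Ω, -deriv (hardyProfile R s γ) (infDist x Ωᶜ) * |u x| := by
        rw [← integral_const_mul, ← integral_const_mul,
          ← integral_add (hint_pow.const_mul _) (hint_log.const_mul _)]
        refine setIntegral_congr_fun hΩ.measurableSet fun x hx => ?_
        simp only [neg_deriv_hardyProfile (hd x hx)]
        ring
    _ ≤ ∫ x in Ω, hardyProfile R s γ (infDist x Ωᶜ) * ‖fderiv ℝ u x‖ :=
        integral_neg_deriv_comp_infDist_mul_abs_le hΩ hne hsuper
          (fun x hx => contDiffAt_hardyProfile (hd x hx))
          (fun x hx => hardyProfile_nonneg hs hγ (hd x hx)) hu huc huΩ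
    _ ≤ ∫ x in Ω, ‖fderiv ℝ u x‖ / infDist x Ωᶜ ^ (s - 1) := by
        simp only [div_eq_inv_mul]
        exact setIntegral_mono_on
          (integrableOn_comp_infDist_mul_norm_fderiv (fun x hx =>
            (contDiffAt_hardyProfile (n := 0) (hd x hx)).continuousAt) hu huc huΩ)
          (integrableOn_comp_infDist_mul_norm_fderiv (fun x hx =>
            continuousAt_inv_rpow (s - 1) (hd x hx).1) hu huc huΩ) hΩ.measurableSet
          fun x hx =>
            mul_le_mul_of_nonneg_right (hardyProfile_le_inv_rpow (hd x hx)) (norm_nonneg _)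

/-- `L^1` weighted Hardy inequality with logarithmic remainder on sets
satisfying `−Δd ≥ 0` and having finite inner radius. -/
theorem l1_weighted_hardy_log_remainder_meanconvex (n : ℕ) (hn : 1 ≤ n)
    (Ω : Set (EuclideanSpace ℝ (Fin n))) (hΩo : IsOpen Ω) (hΩne : Ω.Nonempty)
    (hΩuniv : Ω ≠ Set.univ)
    (hsub : ∀ φ : EuclideanSpace ℝ (Fin n) → ℝ, ContDiff ℝ (⊤ : ℕ∞) φ →
      HasCompactSupport φ → tsupport φ ⊆ Ω → (∀ z, 0 ≤ φ z) →
      (∫ x in Ω, Metric.infDist x Ωᶜ * lapl φ x) ≤ 0)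
    (R : ℝ) (hR : IsLUB ((fun x => Metric.infDist x Ωᶜ) '' Ω) R) :
    ∀ s : ℝ, 1 ≤ s → ∀ γ : ℝ, 1 < γ →
    ∀ u : EuclideanSpace ℝ (Fin n) → ℝ, ContDiff ℝ (⊤ : ℕ∞) u →
      HasCompactSupport u → tsupport u ⊆ Ω →
      (∫ x in Ω, ‖fderiv ℝ u x‖ / (Metric.infDist x Ωᶜ) ^ (s - 1)) ≥
        (s - 1) * (∫ x in Ω, |u x| / (Metric.infDist x Ωᶜ) ^ s)
        + ((γ - 1) / R ^ (s - 1)) *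
            ∫ x in Ω, (|u x| / Metric.infDist x Ωᶜ) *
              ((1 - Real.log (Metric.infDist x Ωᶜ / R))⁻¹) ^ γ := by
  intro s hs γ hγ u hu huc huΩ
  obtain ⟨C, hC⟩ := hu.lipschitzWith_of_hasCompactSupport huc (by simp)
  have hsuper : IsWeaklySuperharmonicOn (infDist · Ωᶜ) Ω := fun φ hφ hφc hφΩ hφ0 => by
    simpa only [lapl_eq_laplacian (hφ.of_le (by norm_cast))] using hsub φ hφ hφc hφΩ hφ0
  exact l1_weighted_hardy_log_remainder_meanconvex_general hΩo (nonempty_compl.2 hΩuniv) hsuper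
    (fun x hx => hR.1 (mem_image_of_mem _ hx)) hs hγ.le hC huc huΩ
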